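/- Let I ⊆ A = K[x_1,…,x_n] be a nonzero monomial ideal with ext(I) = {a_1,…,a_r}. Then for every integer m ≥ 1, the extreme points of conv(I^m) are exactly {m·a_1,…,m·a_r}, and the ideal J^{[m]} = (x^{m a_1},…,x^{m a_r}) is the unique minimal monomial reduction ideal of I^m. -/

import Mathlib

open MvPolynomial Pointwise

attribute [local instance] Classical.propDecidable

noncomputable section

/-- The real exponent vector of a monomial exponent `a : Fin n →₀ ℕ`. -/
def expVec {n : ℕ} (a : Fin n →₀ ℕ) : Fin n → ℝ := fun i => (a i : ℝ)

/-- The standard inner product on `ℝ^n`. -/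
def dotR {n : ℕ} (u v : Fin n → ℝ) : ℝ := ∑ i, u i * v i

/-- A monomial ideal: an ideal generated by a set of monomials. -/
def IsMonomialIdeal {K : Type*} [Field K] {n : ℕ} (I : Ideal (MvPolynomial (Fin n) K)) : Prop :=
  ∃ S : Set (Fin n →₀ ℕ), I = Ideal.span ((fun a => (monomial a (1 : K))) '' S)

/-- The Newton polyhedron of an ideal: the convex hull of the exponent vectors of the
monomials belonging to the ideal. -/
def newtonPolyhedron {K : Type*} [Field K] {n : ℕ} (I : Ideal (MvPolynomial (Fin n) K)) :
    Set (Fin n → ℝ) :=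
  convexHull ℝ {v | ∃ a : Fin n →₀ ℕ, monomial a (1 : K) ∈ I ∧ v = expVec a}

/-- The hyperplane `{v : ⟨u,v⟩ = c}` is a supporting hyperplane of `C`:
`C ⊆ {v : ⟨u,v⟩ ≥ c}` and the hyperplane meets `C`. -/
def IsSupp {n : ℕ} (C : Set (Fin n → ℝ)) (u : Fin n → ℝ) (c : ℝ) : Prop :=
  (∀ v ∈ C, c ≤ dotR u v) ∧ ∃ v ∈ C, dotR u v = c

/-- `F` is a proper face of `C`: `F = S ∩ C` for some supporting hyperplane `S`, `F ≠ C`. -/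
def IsProperFace {n : ℕ} (C F : Set (Fin n → ℝ)) : Prop :=
  ∃ u c, u ≠ 0 ∧ IsSupp C u c ∧ F = {v ∈ C | dotR u v = c} ∧ F ≠ C

/-- A compact face is a proper face that is compact. -/
def IsCompactFace {n : ℕ} (C F : Set (Fin n → ℝ)) : Prop :=
  IsProperFace C F ∧ IsCompact F

/-- A maximal compact face: a compact face maximal under inclusion. -/
def IsMaxCompactFace {n : ℕ} (C F : Set (Fin n → ℝ)) : Prop :=
  IsCompactFace C F ∧ ∀ G, IsCompactFace C G → F ⊆ G → F = G

/-- The graded maximal ideal `(x_1, …, x_n)` of `K[x_1, …, x_n]`. -/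
def maxIdeal (K : Type*) [Field K] (n : ℕ) : Ideal (MvPolynomial (Fin n) K) :=
  Ideal.span (Set.range fun i => (X i : MvPolynomial (Fin n) K))

/-- `f` is a minimal generator of the monomial ideal `L` if `f ∈ L` and `f ∉ (x_1,…,x_n)·L`. -/
def IsMinGen {K : Type*} [Field K] {n : ℕ} (L : Ideal (MvPolynomial (Fin n) K))
    (f : MvPolynomial (Fin n) K) : Prop :=
  f ∈ L ∧ f ∉ maxIdeal K n * L

/-- `L` is a reduction ideal of `I`: `L ⊆ I` and `L·I^{m-1} = I^m` for some `m ≥ 1`. -/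
def IsReduction {K : Type*} [Field K] {n : ℕ} (L I : Ideal (MvPolynomial (Fin n) K)) : Prop :=
  L ≤ I ∧ ∃ m : ℕ, 1 ≤ m ∧ L * I ^ (m - 1) = I ^ m


lemma mono_mem {K : Type*} [Field K] {n : ℕ} (S : Set (Fin n →₀ ℕ)) (a : Fin n →₀ ℕ) :
    monomial a (1 : K) ∈ Ideal.span ((fun a => (monomial a (1 : K))) '' S) ↔ ∃ s ∈ S, s ≤ a := by
  rw [MvPolynomial.mem_ideal_span_monomial_image]
  simp [MvPolynomial.support_monomial]

lemma mono_mul {K : Type*} [Field K] {n : ℕ} (S T : Set (Fin n →₀ ℕ)) :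
    Ideal.span ((fun a => (monomial a (1 : K))) '' S) * Ideal.span ((fun a => (monomial a (1 : K))) '' T)
      = Ideal.span ((fun a => (monomial a (1 : K))) '' (S + T)) := by
  rw [Ideal.span_mul_span']
  congr 1
  ext f
  simp only [Set.mem_mul, Set.mem_image, Set.mem_add]
  constructor
  · rintro ⟨_, ⟨a, ha, rfl⟩, _, ⟨b, hb, rfl⟩, rfl⟩
    exact ⟨a + b, ⟨a, ha, b, hb, rfl⟩, by simp [monomial_mul]⟩
  · rintro ⟨_, ⟨a, ha, b, hb, rfl⟩, rfl⟩
    exact ⟨_, ⟨a, ha, rfl⟩, _, ⟨b, hb, rfl⟩, by simp [monomial_mul]⟩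

lemma IsMonomialIdeal.mul {K : Type*} [Field K] {n : ℕ} {I J : Ideal (MvPolynomial (Fin n) K)}
    (hI : IsMonomialIdeal I) (hJ : IsMonomialIdeal J) : IsMonomialIdeal (I * J) := by
  obtain ⟨S, rfl⟩ := hI
  obtain ⟨T, rfl⟩ := hJ
  exact ⟨S + T, mono_mul S T⟩

lemma IsMonomialIdeal.pow {K : Type*} [Field K] {n : ℕ} {I : Ideal (MvPolynomial (Fin n) K)}
    (hI : IsMonomialIdeal I) (k : ℕ) : IsMonomialIdeal (I ^ k) := by
  induction k with
  | zero => exact ⟨{0}, by simp⟩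
  | succ k ih => rw [pow_succ]; exact ih.mul hI

/-- Exponents of a product of monomial ideals split. -/
lemma mem_mul_split {K : Type*} [Field K] {n : ℕ} {I J : Ideal (MvPolynomial (Fin n) K)}
    (hI : IsMonomialIdeal I) (hJ : IsMonomialIdeal J) {c : Fin n →₀ ℕ}
    (hc : monomial c (1 : K) ∈ I * J) :
    ∃ a b, monomial a (1 : K) ∈ I ∧ monomial b (1 : K) ∈ J ∧ c = a + b := by
  obtain ⟨S, rfl⟩ := hI
  obtain ⟨T, rfl⟩ := hJ
  rw [mono_mul, mono_mem] at hc
  obtain ⟨_, ⟨a, ha, b, hb, rfl⟩, hle⟩ := hc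
  refine ⟨a, c - a, (mono_mem _ _).2 ⟨a, ha, le_rfl⟩, (mono_mem _ _).2 ⟨b, hb, ?_⟩, ?_⟩
  · exact le_tsub_of_add_le_left hle
  · exact (add_tsub_cancel_of_le (le_trans (le_add_of_nonneg_right (zero_le)) hle)).symm

lemma expVec_add {n : ℕ} (a b : Fin n →₀ ℕ) : expVec (a + b) = expVec a + expVec b := by
  ext i; simp [expVec]

lemma expVec_inj {n : ℕ} {a b : Fin n →₀ ℕ} (h : expVec a = expVec b) : a = b := by
  ext i
  have := congrFun h i
  simpa [expVec] using this

lemma expVec_nsmul {n : ℕ} (m : ℕ) (a : Fin n →₀ ℕ) : expVec (m • a) = (m : ℝ) • expVec a := by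
  ext i; simp [expVec]

lemma newton_mul {K : Type*} [Field K] {n : ℕ} {I J : Ideal (MvPolynomial (Fin n) K)}
    (hI : IsMonomialIdeal I) (hJ : IsMonomialIdeal J) :
    newtonPolyhedron (I * J) = newtonPolyhedron I + newtonPolyhedron J := by
  unfold newtonPolyhedron
  rw [← convexHull_add]
  congr 1
  ext v
  simp only [Set.mem_ofPred_eq, Set.mem_add]
  constructor
  · rintro ⟨c, hc, rfl⟩
    obtain ⟨a, b, ha, hb, rfl⟩ := mem_mul_split hI hJ hc
    exact ⟨_, ⟨a, ha, rfl⟩, _, ⟨b, hb, rfl⟩, (expVec_add a b).symm⟩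
  · rintro ⟨_, ⟨a, ha, rfl⟩, _, ⟨b, hb, rfl⟩, rfl⟩
    refine ⟨a + b, ?_, (expVec_add a b).symm⟩
    have := Ideal.mul_mem_mul ha hb
    rwa [monomial_mul, one_mul] at this

lemma newton_pow {K : Type*} [Field K] {n : ℕ} {I : Ideal (MvPolynomial (Fin n) K)}
    (hI : IsMonomialIdeal I) (m : ℕ) (hm : 1 ≤ m) :
    newtonPolyhedron (I ^ m) = (m : ℝ) • newtonPolyhedron I := by
  induction m, hm using Nat.le_induction with
  | base => simp
  | succ k hk ih =>
    rw [pow_succ, newton_mul (hI.pow k) hI, ih]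
    have h : Convex ℝ (newtonPolyhedron I) := convex_convexHull ℝ _
    have := h.add_smul (p := (k : ℝ)) (q := 1) (by positivity) (by norm_num)
    push_cast
    rw [this, one_smul]

lemma ext_pow {K : Type*} [Field K] {n : ℕ} {I : Ideal (MvPolynomial (Fin n) K)}
    (hI : IsMonomialIdeal I) (m : ℕ) (hm : 1 ≤ m) :
    Set.extremePoints ℝ (newtonPolyhedron (I ^ m)) =
      (fun v => (m : ℝ) • v) '' Set.extremePoints ℝ (newtonPolyhedron I) := by
  rw [newton_pow hI m hm]
  have hm0 : (m : ℝ) ≠ 0 := by positivity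
  exact (image_extremePoints (LinearEquiv.smulOfNeZero ℝ (Fin n → ℝ) (m : ℝ) hm0) _).symm

lemma ext_mem {K : Type*} [Field K] {n : ℕ} {I : Ideal (MvPolynomial (Fin n) K)}
    {v : Fin n → ℝ} (hv : v ∈ Set.extremePoints ℝ (newtonPolyhedron I)) :
    ∃ a : Fin n →₀ ℕ, monomial a (1 : K) ∈ I ∧ v = expVec a := by
  have h : v ∈ {v | ∃ a : Fin n →₀ ℕ, monomial a (1 : K) ∈ I ∧ v = expVec a} :=
    extremePoints_convexHull_subset hv
  exact h

/-- Any monomial reduction contains the extreme monomials. -/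
lemma red_contains {K : Type*} [Field K] {n : ℕ} {I L : Ideal (MvPolynomial (Fin n) K)}
    (hI : IsMonomialIdeal I) (hL : IsMonomialIdeal L) (hr : IsReduction L I) {a : Fin n →₀ ℕ}
    (ha : expVec a ∈ Set.extremePoints ℝ (newtonPolyhedron I)) : monomial a (1 : K) ∈ L := by
  obtain ⟨hle, k, hk, heq⟩ := hr
  obtain ⟨a', haI, haa⟩ := ext_mem ha
  obtain rfl := expVec_inj haa
  obtain ⟨j, rfl⟩ : ∃ j, k = j + 1 := ⟨k - 1, by omega⟩
  rw [Nat.add_sub_cancel] at heq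
  rcases Nat.eq_zero_or_pos j with rfl | hj
  · simp at heq; rwa [heq]
  have h1 : monomial ((j + 1) • a) (1 : K) ∈ L * I ^ j := by
    rw [heq]
    have := Ideal.pow_mem_pow haI (j + 1)
    rwa [monomial_pow, one_pow] at this
  obtain ⟨l, c, hl, hc, hlc⟩ := mem_mul_split hL (hI.pow j) h1
  have hcn : expVec c ∈ newtonPolyhedron (I ^ j) := subset_convexHull ℝ _ ⟨c, hc, rfl⟩
  rw [newton_pow hI j hj] at hcn
  obtain ⟨d, hd, hdc⟩ := hcn
  have hln : expVec l ∈ newtonPolyhedron I := subset_convexHull ℝ _ ⟨l, hle hl, rfl⟩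
  have hj0 : (0 : ℝ) < j := by exact_mod_cast hj
  have := ha.2 hln hd ⟨1 / ((j : ℝ) + 1), j / ((j : ℝ) + 1), by positivity, by positivity,
    by field_simp; ring, ?_⟩
  · obtain rfl := expVec_inj this
    exact hl
  · have h2 := congrArg expVec hlc
    rw [expVec_nsmul, expVec_add, ← hdc] at h2
    ext i
    have h3 := congrFun h2 i
    simp at h3 ⊢
    field_simp
    linarith

lemma dirichlet {ι : Type*} [Fintype ι] (w : ι → ℝ) (hw : ∀ i, 0 ≤ w i) (ε : ℝ) (hε : 0 < ε) :
    ∃ N : ℕ, 1 ≤ N ∧ ∃ k : ι → ℕ, ∀ i, |(N : ℝ) * w i - k i| < ε := by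
  let f : ℕ → ι → ℝ := fun N i => Int.fract ((N : ℝ) * w i)
  have hf : ∀ N, f N ∈ Set.Icc (0 : ι → ℝ) 1 := fun N =>
    ⟨fun i => Int.fract_nonneg _, fun i => (Int.fract_lt_one _).le⟩
  obtain ⟨x, _, φ, hφ, hx⟩ := isCompact_Icc.tendsto_subseq hf
  obtain ⟨M, hM⟩ := Metric.cauchySeq_iff.1 hx.cauchySeq ε hε
  have hlt : φ M < φ (M + 1) := hφ (Nat.lt_succ_self M)
  refine ⟨φ (M + 1) - φ M, by omega,
    fun i => (⌊(φ (M + 1) : ℝ) * w i⌋ - ⌊(φ M : ℝ) * w i⌋).toNat, fun i => ?_⟩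
  have hd := (dist_le_pi_dist (f (φ (M + 1))) (f (φ M)) i).trans_lt (hM (M + 1) (by omega) M le_rfl)
  have hmono : ⌊(φ M : ℝ) * w i⌋ ≤ ⌊(φ (M + 1) : ℝ) * w i⌋ :=
    Int.floor_le_floor (mul_le_mul_of_nonneg_right (by exact_mod_cast hlt.le) (hw i))
  have hc : (((⌊(φ (M + 1) : ℝ) * w i⌋ - ⌊(φ M : ℝ) * w i⌋).toNat : ℕ) : ℝ)
      = (⌊(φ (M + 1) : ℝ) * w i⌋ : ℝ) - (⌊(φ M : ℝ) * w i⌋ : ℝ) := by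
    have : (((⌊(φ (M + 1) : ℝ) * w i⌋ - ⌊(φ M : ℝ) * w i⌋).toNat : ℤ) : ℝ)
      = ((⌊(φ (M + 1) : ℝ) * w i⌋ - ⌊(φ M : ℝ) * w i⌋ : ℤ) : ℝ) := by
      rw [Int.toNat_of_nonneg (by omega)]
    push_cast at this
    exact_mod_cast this
  rw [hc, Nat.cast_sub hlt.le]
  simp only [f, Real.dist_eq, Int.fract] at hd
  refine lt_of_eq_of_lt (congrArg abs ?_) hd
  simp only [sub_mul]
  ring

/-- The upper hull of a finite set of exponents. -/
def upHull {n : ℕ} (T : Finset (Fin n →₀ ℕ)) : Set (Fin n → ℝ) :=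
  {x | ∃ w : (Fin n →₀ ℕ) → ℝ, (∀ s, 0 ≤ w s) ∧ ∑ s ∈ T, w s = 1 ∧
    ∀ i, ∑ s ∈ T, w s * (s i : ℝ) ≤ x i}

lemma upHull_convex {n : ℕ} (T : Finset (Fin n →₀ ℕ)) : Convex ℝ (upHull T) := by
  rintro x ⟨w, hw, hw1, hwx⟩ y ⟨z, hz, hz1, hzy⟩ a b ha hb hab
  refine ⟨fun s => a * w s + b * z s, fun s => ?_, ?_, fun i => ?_⟩
  · have := hw s; have := hz s; positivity
  · rw [Finset.sum_add_distrib, ← Finset.mul_sum, ← Finset.mul_sum, hw1, hz1]; linarith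
  · have : ∑ s ∈ T, (a * w s + b * z s) * (s i : ℝ)
        = a * ∑ s ∈ T, w s * (s i : ℝ) + b * ∑ s ∈ T, z s * (s i : ℝ) := by
      rw [Finset.mul_sum, Finset.mul_sum, ← Finset.sum_add_distrib]
      exact Finset.sum_congr rfl fun s _ => by ring
    rw [this]
    simp only [Pi.add_apply, Pi.smul_apply, smul_eq_mul]
    exact add_le_add (mul_le_mul_of_nonneg_left (hwx i) ha) (mul_le_mul_of_nonneg_left (hzy i) hb)

lemma upHull_int {n : ℕ} (T : Finset (Fin n →₀ ℕ)) (g : Fin n →₀ ℕ) (hg : expVec g ∈ upHull T) :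
    ∃ N : ℕ, 1 ≤ N ∧ ∃ k : (Fin n →₀ ℕ) → ℕ, ∑ s ∈ T, k s = N ∧ ∑ s ∈ T, k s • s ≤ N • g := by
  obtain ⟨w, hw, hw1, hwg⟩ := hg
  set C : ℝ := T.card + ∑ s ∈ T, ∑ i, (s i : ℝ) with hC
  have hS0 : 0 ≤ ∑ s ∈ T, ∑ i, (s i : ℝ) := by positivity
  have hC0 : 0 ≤ C := by positivity
  set ε : ℝ := 1 / (C + 1) with hεd
  have hε : 0 < ε := by positivity
  have hεC : ε * C < 1 := by
    rw [hεd, one_div, inv_mul_lt_iff₀ (by positivity)]; linarith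
  obtain ⟨N, hN, k', hk'⟩ := dirichlet (fun s : T => w s) (fun s => hw s) ε hε
  let k : (Fin n →₀ ℕ) → ℕ := fun s => if h : s ∈ T then k' ⟨s, h⟩ else 0
  have hk : ∀ s ∈ T, |(N : ℝ) * w s - k s| < ε := by
    intro s hs
    have := hk' ⟨s, hs⟩
    simpa [k, hs] using this
  refine ⟨N, hN, k, ?_, ?_⟩
  · have h1 : |(N : ℝ) - ((∑ s ∈ T, k s : ℕ) : ℝ)| < 1 := by
      have : (N : ℝ) - ((∑ s ∈ T, k s : ℕ) : ℝ) = ∑ s ∈ T, ((N : ℝ) * w s - k s) := by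
        rw [Finset.sum_sub_distrib, ← Finset.mul_sum, hw1]; push_cast; ring
      rw [this]
      calc _ ≤ ∑ s ∈ T, |(N : ℝ) * w s - k s| := Finset.abs_sum_le_sum_abs _ _
        _ ≤ ∑ s ∈ T, ε := Finset.sum_le_sum fun s hs => (hk s hs).le
        _ = ε * T.card := by rw [Finset.sum_const, nsmul_eq_mul]; ring
        _ ≤ ε * C := by gcongr; linarith
        _ < 1 := hεC
    have h2 : |(N : ℤ) - ((∑ s ∈ T, k s : ℕ) : ℤ)| < 1 := by exact_mod_cast h1
    rw [Int.abs_lt_one_iff] at h2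
    omega
  · intro i
    have h1 : ((∑ s ∈ T, k s * s i : ℕ) : ℝ) < (N : ℝ) * g i + 1 := by
      push_cast
      have h3 : ∑ s ∈ T, (s i : ℝ) ≤ C := by
        have : ∑ s ∈ T, (s i : ℝ) ≤ ∑ s ∈ T, ∑ i, (s i : ℝ) :=
          Finset.sum_le_sum fun s _ =>
            Finset.single_le_sum (f := fun i => (s i : ℝ)) (fun _ _ => by positivity) (Finset.mem_univ i)
        have : (0 : ℝ) ≤ T.card := by positivity
        linarith
      calc ∑ s ∈ T, (k s : ℝ) * (s i : ℝ) ≤ ∑ s ∈ T, ((N : ℝ) * (w s * s i) + ε * s i) := by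
            refine Finset.sum_le_sum fun s hs => ?_
            have := (abs_lt.1 (hk s hs)).1
            have h0 : (0 : ℝ) ≤ s i := by positivity
            nlinarith
        _ = (N : ℝ) * ∑ s ∈ T, w s * s i + ε * ∑ s ∈ T, (s i : ℝ) := by
            rw [Finset.sum_add_distrib, ← Finset.mul_sum, ← Finset.mul_sum]
        _ ≤ (N : ℝ) * g i + ε * C := by
            have := hwg i
            simp only [expVec] at this
            gcongr
        _ < _ := by linarith
    have h2 : ∑ s ∈ T, k s * s i < N * g i + 1 := by exact_mod_cast h1
    simp only [Finsupp.finsetSum_apply, Finsupp.smul_apply, smul_eq_mul]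
    omega

lemma pow_union {R : Type*} [CommRing R] {I J A B : Ideal R} (hA : A ≤ I) (hB : B ≤ I) {p q : ℕ}
    (hp : 1 ≤ p) (hq : 1 ≤ q) (h1 : A ^ p ≤ J * I ^ (p - 1)) (h2 : B ^ q ≤ J * I ^ (q - 1)) :
    (A ⊔ B) ^ (p + q) ≤ J * I ^ (p + q - 1) := by
  rw [← Ideal.add_eq_sup, add_pow, Ideal.sum_eq_sup]
  refine Finset.sup_le fun k hk => Ideal.mul_le_left.trans ?_
  rw [Finset.mem_range] at hk
  by_cases hkp : p ≤ k
  · calc A ^ k * B ^ (p + q - k) = A ^ p * (A ^ (k - p) * B ^ (p + q - k)) := by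
          rw [← mul_assoc, ← pow_add]; congr 2; omega
      _ ≤ (J * I ^ (p - 1)) * (I ^ (k - p) * I ^ (p + q - k)) :=
          Ideal.mul_mono h1 (Ideal.mul_mono (Ideal.pow_right_mono hA _) (Ideal.pow_right_mono hB _))
      _ = _ := by rw [mul_assoc, ← pow_add, ← pow_add]; congr 2; omega
  · calc A ^ k * B ^ (p + q - k) = B ^ q * (A ^ k * B ^ (p - k)) := by
          rw [mul_left_comm, ← pow_add]; congr 2; omega
      _ ≤ (J * I ^ (q - 1)) * (I ^ k * I ^ (p - k)) :=
          Ideal.mul_mono h2 (Ideal.mul_mono (Ideal.pow_right_mono hA _) (Ideal.pow_right_mono hB _))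
      _ = _ := by rw [mul_assoc, ← pow_add, ← pow_add]; congr 2; omega

lemma pow_finset {R : Type*} [CommRing R] {I J : Ideal R} (F : Finset R) (hF : ∀ f ∈ F, f ∈ I)
    (h : ∀ f ∈ F, ∃ N : ℕ, 1 ≤ N ∧ f ^ N ∈ J * I ^ (N - 1)) :
    ∃ M : ℕ, 1 ≤ M ∧ Ideal.span (F : Set R) ^ M ≤ J * I ^ (M - 1) := by
  induction F using Finset.induction_on with
  | empty => exact ⟨1, le_rfl, by simp⟩
  | insert f F hf ih =>
    obtain ⟨q, hq, hq'⟩ := ih (fun g hg => hF g (Finset.mem_insert_of_mem hg))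
      (fun g hg => h g (Finset.mem_insert_of_mem hg))
    obtain ⟨p, hp, hp'⟩ := h f (Finset.mem_insert_self _ _)
    refine ⟨p + q, by omega, ?_⟩
    rw [Finset.coe_insert, Ideal.span_insert]
    refine pow_union ?_ ?_ hp hq ?_ hq'
    · rw [Ideal.span_singleton_le_iff_mem]; exact hF f (Finset.mem_insert_self _ _)
    · exact Ideal.span_le.2 fun g hg => hF g (Finset.mem_insert_of_mem hg)
    · rw [Ideal.span_singleton_pow, Ideal.span_singleton_le_iff_mem]; exact hp'

lemma upHull_erase {n : ℕ} {T : Finset (Fin n →₀ ℕ)} {t : Fin n →₀ ℕ} (ht : t ∈ T)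
    (h : expVec t ∈ upHull (T.erase t)) : upHull T ⊆ upHull (T.erase t) := by
  rintro x ⟨w, hw, hw1, hwx⟩
  obtain ⟨c, hc, hc1, hct⟩ := h
  refine ⟨fun s => w s + w t * c s, fun s => ?_, ?_, fun i => ?_⟩
  · have := hw s; have := hw t; have := hc s; positivity
  · rw [Finset.sum_add_distrib, ← Finset.mul_sum, hc1, mul_one, Finset.sum_erase_add _ _ ht, hw1]
  · have h1 : ∑ s ∈ T.erase t, (w s + w t * c s) * (s i : ℝ)
        = ∑ s ∈ T.erase t, w s * (s i : ℝ) + w t * ∑ s ∈ T.erase t, c s * (s i : ℝ) := by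
      rw [Finset.mul_sum, ← Finset.sum_add_distrib]
      exact Finset.sum_congr rfl fun s _ => by ring
    have h2 := hwx i
    rw [← Finset.sum_erase_add _ _ ht] at h2
    have h3 := mul_le_mul_of_nonneg_left (hct i) (hw t)
    simp only [expVec] at h3
    rw [h1]; linarith

lemma upHull_extreme {n : ℕ} {T : Finset (Fin n →₀ ℕ)} {t : Fin n →₀ ℕ} (ht : t ∈ T)
    (h : expVec t ∉ upHull (T.erase t)) {x y : Fin n → ℝ} (hx : x ∈ upHull T) (hy : y ∈ upHull T)
    (hxy : expVec t ∈ openSegment ℝ x y) : x = expVec t := by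
  obtain ⟨a, b, ha, hb, hab, hxyt⟩ := hxy
  obtain ⟨w, hw, hw1, hwx⟩ := hx
  obtain ⟨z, hz, hz1, hzy⟩ := hy
  have hti : ∀ i, a * x i + b * y i = t i := fun i => by
    have := congrFun hxyt i
    simpa [expVec] using this
  have key : ∀ v : (Fin n →₀ ℕ) → ℝ, (∀ s, 0 ≤ v s) → ∑ s ∈ T, v s = 1 → v t ≤ 1 := by
    intro v hv hv1
    rw [← hv1]; exact Finset.single_le_sum (fun s _ => hv s) ht
  have hwt := key w hw hw1
  have hzt := key z hz hz1
  by_cases hγ : a * w t + b * z t < 1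
  · exfalso
    apply h
    have hδ : 0 < 1 - (a * w t + b * z t) := by linarith
    set δ := 1 - (a * w t + b * z t) with hδd
    refine ⟨fun s => (a * w s + b * z s) / δ, fun s => ?_, ?_, fun i => ?_⟩
    · have := hw s; have := hz s; positivity
    · rw [← Finset.sum_div, div_eq_one_iff_eq hδ.ne', Finset.sum_add_distrib, ← Finset.mul_sum,
        ← Finset.mul_sum, Finset.sum_erase_eq_sub ht, Finset.sum_erase_eq_sub ht, hw1, hz1]
      rw [hδd]; linarith
    · have h1 : ∑ s ∈ T.erase t, (a * w s + b * z s) / δ * (s i : ℝ)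
          = (a * ∑ s ∈ T.erase t, w s * (s i : ℝ) + b * ∑ s ∈ T.erase t, z s * (s i : ℝ)) / δ := by
        rw [Finset.mul_sum, Finset.mul_sum, ← Finset.sum_add_distrib, Finset.sum_div]
        exact Finset.sum_congr rfl fun s _ => by ring
      rw [h1, div_le_iff₀ hδ, Finset.sum_erase_eq_sub ht, Finset.sum_erase_eq_sub ht]
      have h2 := mul_le_mul_of_nonneg_left (hwx i) ha.le
      have h3 := mul_le_mul_of_nonneg_left (hzy i) hb.le
      have h4 := hti i
      simp only [expVec]
      rw [hδd]
      linarith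
  · have hw' : w t = 1 := by nlinarith
    have hz' : z t = 1 := by nlinarith
    have low : ∀ v : (Fin n →₀ ℕ) → ℝ, (∀ s, 0 ≤ v s) → v t = 1 → ∀ i,
        (t i : ℝ) ≤ ∑ s ∈ T, v s * (s i : ℝ) := by
      intro v hv hvt i
      have := Finset.single_le_sum (f := fun s : Fin n →₀ ℕ => v s * (s i : ℝ))
        (fun s _ => mul_nonneg (hv s) (by positivity)) ht
      simpa [hvt] using this
    ext i
    have h1 := (low w hw hw' i).trans (hwx i)
    have h2 := (low z hz hz' i).trans (hzy i)
    have h3 := hti i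
    simp only [expVec]
    nlinarith

/-- The extreme ideal is a reduction. -/
lemma ext_red {K : Type*} [Field K] {n : ℕ} {I : Ideal (MvPolynomial (Fin n) K)}
    (hI : IsMonomialIdeal I) :
    IsReduction (Ideal.span {f | ∃ a : Fin n →₀ ℕ,
          expVec a ∈ Set.extremePoints ℝ (newtonPolyhedron I) ∧ f = monomial a (1 : K)}) I := by
  set J := Ideal.span {f | ∃ a : Fin n →₀ ℕ,
          expVec a ∈ Set.extremePoints ℝ (newtonPolyhedron I) ∧ f = monomial a (1 : K)} with hJ
  have hJI : J ≤ I := by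
    refine Ideal.span_le.2 ?_
    rintro _ ⟨a, ha, rfl⟩
    obtain ⟨b, hb, hab⟩ := ext_mem ha
    rw [expVec_inj hab]; exact hb
  refine ⟨hJI, ?_⟩
  -- finite generation
  obtain ⟨G, hG⟩ : ∃ G : Finset (Fin n →₀ ℕ),
      I = Ideal.span ((fun a => (monomial a (1 : K))) '' (G : Set (Fin n →₀ ℕ))) := by
    obtain ⟨S, rfl⟩ := hI
    have hfg : (Ideal.span ((fun a => (monomial a (1 : K))) '' S)).FG :=
      IsNoetherian.noetherian _
    obtain ⟨F, hFS, hF⟩ := Submodule.fg_span_iff_fg_span_finset_subset _ |>.1 hfg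
    obtain ⟨G, _, hG⟩ := Finset.subset_set_image_iff.1 hFS
    refine ⟨G, ?_⟩
    rw [← hG, Finset.coe_image] at hF
    exact hF
  have hmemG : ∀ g ∈ G, monomial g (1 : K) ∈ I := fun g hg => by
    rw [hG, mono_mem]; exact ⟨g, hg, le_rfl⟩
  -- a minimal generating set for the polyhedron
  let Q : Finset (Fin n →₀ ℕ) → Prop := fun T =>
    ∀ g : Fin n →₀ ℕ, monomial g (1 : K) ∈ I → expVec g ∈ upHull T
  have hQG : Q G := by
    intro g hg
    rw [hG, mono_mem] at hg
    obtain ⟨s, hs, hsg⟩ := hg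
    have hs' : s ∈ G := hs
    refine ⟨fun r => if r = s then 1 else 0, fun r => by dsimp only; split_ifs <;> norm_num, ?_, fun i => ?_⟩
    · simp [hs']
    · simp only [ite_mul, one_mul, zero_mul, Finset.sum_ite_eq', hs', if_true, expVec]
      exact_mod_cast hsg i
  obtain ⟨T, hTm, hTmin⟩ := Finset.exists_min_image (G.powerset.filter Q) Finset.card
    ⟨G, by simp [hQG]⟩
  rw [Finset.mem_filter, Finset.mem_powerset] at hTm
  obtain ⟨hTG, hQT⟩ := hTm
  have hsub : newtonPolyhedron I ⊆ upHull T := by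
    refine convexHull_min ?_ (upHull_convex T)
    rintro _ ⟨a, ha, rfl⟩
    exact hQT a ha
  have hText : ∀ t ∈ T, expVec t ∈ Set.extremePoints ℝ (newtonPolyhedron I) := by
    intro t ht
    have hnot : expVec t ∉ upHull (T.erase t) := by
      intro hmem
      have := hTmin (T.erase t) (by
        rw [Finset.mem_filter, Finset.mem_powerset]
        exact ⟨(Finset.erase_subset _ _).trans hTG, fun g hg => upHull_erase ht hmem (hQT g hg)⟩)
      have := Finset.card_erase_lt_of_mem ht
      omega
    refine ⟨subset_convexHull ℝ _ ⟨t, hmemG t (hTG ht), rfl⟩, fun x hx y hy hxy => ?_⟩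
    exact upHull_extreme ht hnot (hsub hx) (hsub hy) hxy
  have hTJ : ∀ t ∈ T, monomial t (1 : K) ∈ J := fun t ht =>
    Ideal.subset_span ⟨t, hText t ht, rfl⟩
  have hint : ∀ g : Fin n →₀ ℕ, monomial g (1 : K) ∈ I →
      ∃ N : ℕ, 1 ≤ N ∧ (monomial g (1 : K)) ^ N ∈ J * I ^ (N - 1) := by
    intro g hg
    obtain ⟨N, hN, k, hk, hkg⟩ := upHull_int T g (hQT g hg)
    refine ⟨N, hN, ?_⟩
    have h1 : J ^ N ≤ J * I ^ (N - 1) := by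
      obtain ⟨j, rfl⟩ : ∃ j, N = j + 1 := ⟨N - 1, by omega⟩
      rw [pow_succ', Nat.add_sub_cancel]
      exact Ideal.mul_mono_right (Ideal.pow_right_mono hJI j)
    apply h1
    have h2 : ∏ s ∈ T, (monomial s (1 : K)) ^ k s ∈ J ^ N := by
      rw [← hk, ← Finset.prod_pow_eq_pow_sum]
      exact Ideal.prod_mem_prod fun s hs => Ideal.pow_mem_pow (hTJ s hs) _
    have h3 : ∏ s ∈ T, (monomial s (1 : K)) ^ k s = monomial (∑ s ∈ T, k s • s) 1 := by
      rw [monomial_sum_one]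
      exact Finset.prod_congr rfl fun s _ => by rw [monomial_pow, one_pow]
    rw [monomial_pow, one_pow, ← tsub_add_cancel_of_le hkg, ← one_mul (1 : K), ← monomial_mul, ← h3]
    exact Ideal.mul_mem_left _ _ h2
  obtain ⟨M, hM, hle⟩ := pow_finset (I := I) (J := J) (G.image fun a => monomial a (1 : K))
    (by
      intro f hf
      obtain ⟨g, hg, rfl⟩ := Finset.mem_image.1 hf
      exact hmemG g hg)
    (by
      intro f hf
      obtain ⟨g, hg, rfl⟩ := Finset.mem_image.1 hf
      exact hint g (hmemG g hg))
  rw [Finset.coe_image, ← hG] at hle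
  refine ⟨M, hM, le_antisymm ?_ hle⟩
  calc J * I ^ (M - 1) ≤ I * I ^ (M - 1) := Ideal.mul_mono_left hJI
    _ = I ^ M := by rw [← pow_succ']; congr 1; omega

theorem stmt3 {K : Type*} [Field K] {n : ℕ} (I : Ideal (MvPolynomial (Fin n) K))
    (hI : IsMonomialIdeal I) (hne : I ≠ ⊥) (m : ℕ) (hm : 1 ≤ m) :
    Set.extremePoints ℝ (newtonPolyhedron (I ^ m)) =
      (fun v => (m : ℝ) • v) '' Set.extremePoints ℝ (newtonPolyhedron I) ∧
    ∀ Jm : Ideal (MvPolynomial (Fin n) K),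
      Jm = Ideal.span {f | ∃ a : Fin n →₀ ℕ,
          expVec a ∈ Set.extremePoints ℝ (newtonPolyhedron I) ∧ f = monomial (m • a) (1 : K)} →
      IsReduction Jm (I ^ m) ∧
        ∀ L : Ideal (MvPolynomial (Fin n) K),
          IsMonomialIdeal L → IsReduction L (I ^ m) → Jm ≤ L := by
  have hext := ext_pow hI m hm
  refine ⟨hext, ?_⟩
  rintro Jm rfl
  have heq : {f | ∃ a : Fin n →₀ ℕ,
          expVec a ∈ Set.extremePoints ℝ (newtonPolyhedron I) ∧ f = monomial (m • a) (1 : K)}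
      = {f | ∃ a : Fin n →₀ ℕ,
          expVec a ∈ Set.extremePoints ℝ (newtonPolyhedron (I ^ m)) ∧ f = monomial a (1 : K)} := by
    ext f
    simp only [Set.mem_ofPred_eq, hext]
    constructor
    · rintro ⟨a, ha, rfl⟩
      exact ⟨m • a, ⟨expVec a, ha, (expVec_nsmul m a).symm⟩, rfl⟩
    · rintro ⟨b, ⟨v, hv, hvb⟩, rfl⟩
      obtain ⟨a, _, rfl⟩ := ext_mem hv
      refine ⟨a, hv, ?_⟩
      have : m • a = b := expVec_inj (by rw [expVec_nsmul]; exact hvb)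
      rw [this]
  rw [heq]
  refine ⟨ext_red (hI.pow m), fun L hL hr => Ideal.span_le.2 ?_⟩
  rintro _ ⟨a, ha, rfl⟩
  exact red_contains (hI.pow m) hL hr ha
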